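/- If ξ₁ and η are independent random variables, ξ₁ is not Gaussian (and not degenerate), then ξ₁ + η does not have a standard normal distribution. -/

import Mathlib

open MeasureTheory ProbabilityTheory Filter

/-!
Suppose that `X` and `Y` are independent and `X + Y` is Gaussian. The exponential moments of `X + Y`
are all finite, hence so are those of `X` and of `Y`, and the complex moment generating function of
`X` is entire. It has no zeros, because its product with that of `Y` is the exponential of a
polynomial. By Jensen's inequality for `Y`, it is bounded by the exponential of a quadratic
polynomial in `|z|`. Its logarithm is therefore an entire function whose real part is `O(|z|²)`,
which by Borel–Carathéodory and Cauchy's estimates is a polynomial of degree at most `2`, so `X` is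
Gaussian. In a topological vector space, apply this to every continuous linear form.
-/

open Asymptotics Bornology
open scoped NNReal Topology

section EntireFunctions

open scoped Polynomial

lemma differentiableAt_of_differentiableAt_cexp {E : Type*} [NormedAddCommGroup E]
    [NormedSpace ℂ E] {g : E → ℂ} {a : E} (hg : ContinuousAt g a)
    (hexp : DifferentiableAt ℂ (fun z ↦ Complex.exp (g z)) a) : DifferentiableAt ℂ g a := by
  have hclose : ∀ᶠ z in 𝓝 a, ‖g z - g a‖ < Real.pi :=
    (hg.sub_const (g a)).norm.eventually_lt_const (by simpa using Real.pi_pos)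
  have hlog : g =ᶠ[𝓝 a] fun z ↦ g a + Complex.log (Complex.exp (g z) * Complex.exp (-g a)) := by
    filter_upwards [hclose] with z hz
    have him := abs_lt.mp ((Complex.abs_im_le_norm (g z - g a)).trans_lt hz)
    rw [← Complex.exp_add, ← sub_eq_add_neg, Complex.log_exp him.1 him.2.le, add_sub_cancel]
  refine .congr_of_eventuallyEq ?_ hlog
  exact ((hexp.mul_const _).clog (by simp [← Complex.exp_add])).const_add _

lemma exists_differentiableOn_cexp_eqOn {E : Type*} [NormedAddCommGroup E] [NormedSpace ℂ E]
    {U : Set E} (hU : IsSimplyConnected U) (hUo : IsOpen U) {f : E → ℂ}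
    (hf : DifferentiableOn ℂ f U) (hf0 : ∀ z ∈ U, f z ≠ 0) :
    ∃ g : E → ℂ, DifferentiableOn ℂ g U ∧ Set.EqOn (Complex.exp ∘ g) f U := by
  let : NormedSpace ℝ E := NormedSpace.restrictScalars ℝ ℂ E
  obtain ⟨g, hg, hexp⟩ := Complex.exists_continuousOn_eqOn_exp_comp hU hUo hf.continuousOn
    (by simpa using hf0)
  refine ⟨g, fun a ha ↦ ?_, hexp⟩
  have hUa : U ∈ 𝓝 a := hUo.mem_nhds ha
  refine (differentiableAt_of_differentiableAt_cexp (hg.continuousAt hUa) ?_).differentiableWithinAt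
  exact (hf.differentiableAt hUa).congr_of_eventuallyEq (hexp.eventuallyEq_of_mem hUa)

lemma iteratedDeriv_eq_zero_of_isBigO_pow {F : Type*} [NormedAddCommGroup F] [NormedSpace ℂ F]
    [CompleteSpace F] {f : ℂ → F} (hf : Differentiable ℂ f) {n k : ℕ}
    (hO : f =O[cobounded ℂ] fun z ↦ ‖z‖ ^ n) (hnk : n < k) (c : ℂ) :
    iteratedDeriv k f c = 0 := by
  obtain ⟨A, hA, hbound⟩ := hO.exists_nonneg
  obtain ⟨r, -, hr⟩ := hasBasis_cobounded_norm.eventually_iff.mp hbound.bound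
  have hcauchy : ∀ᶠ R : ℝ in atTop,
      ‖iteratedDeriv k f c‖ ≤ k.factorial * (A * 2 ^ n) * (R ^ n / R ^ k) := by
    filter_upwards [eventually_gt_atTop 0, eventually_ge_atTop ‖c‖,
      eventually_ge_atTop (r + ‖c‖)] with R hR0 hRc hRr
    have hsphere : ∀ z ∈ Metric.sphere c R, ‖f z‖ ≤ A * (2 * R) ^ n := by
      intro z hz
      have hzc : ‖z - c‖ = R := mem_sphere_iff_norm.mp hz
      have hlower : r ≤ ‖z‖ := by linarith [norm_sub_le z c]
      have hupper : ‖z‖ ≤ 2 * R := by linarith [norm_le_norm_sub_add z c]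
      calc ‖f z‖ ≤ A * ‖z‖ ^ n := by simpa using hr hlower
        _ ≤ A * (2 * R) ^ n := by gcongr
    calc ‖iteratedDeriv k f c‖ ≤ k.factorial * (A * (2 * R) ^ n) / R ^ k :=
          Complex.norm_iteratedDeriv_le_of_forall_mem_sphere_norm_le k hR0 hf.diffContOnCl hsphere
      _ = k.factorial * (A * 2 ^ n) * (R ^ n / R ^ k) := by ring
  have hlim : Tendsto (fun R : ℝ ↦ k.factorial * (A * 2 ^ n) * (R ^ n / R ^ k)) atTop (𝓝 0) := by
    simpa using (tendsto_pow_div_pow_atTop_zero hnk).const_mul (k.factorial * (A * 2 ^ n))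
  exact norm_le_zero_iff.mp (ge_of_tendsto hlim hcauchy)

lemma exists_polynomial_of_isBigO_pow {f : ℂ → ℂ} (hf : Differentiable ℂ f) {n : ℕ}
    (hO : f =O[cobounded ℂ] fun z ↦ ‖z‖ ^ n) :
    ∃ p : ℂ[X], p.natDegree ≤ n ∧ ∀ z, f z = p.eval z := by
  refine ⟨∑ k ∈ Finset.range (n + 1),
    Polynomial.C ((k.factorial : ℂ)⁻¹ * iteratedDeriv k f 0) * Polynomial.X ^ k, ?_, fun z ↦ ?_⟩
  · refine Polynomial.natDegree_sum_le_of_forall_le _ _ fun k hk ↦ ?_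
    exact (Polynomial.natDegree_C_mul_X_pow_le _ _).trans (Finset.mem_range_succ_iff.mp hk)
  · have htail : ∀ k ∉ Finset.range (n + 1),
        (k.factorial : ℂ)⁻¹ * iteratedDeriv k f 0 * (z - 0) ^ k = 0 := fun k hk ↦ by
      simp [iteratedDeriv_eq_zero_of_isBigO_pow hf hO (by simpa using hk : n < k)]
    rw [← Complex.taylorSeries_eq_of_entire' 0 z hf, tsum_eq_sum htail]
    simp [Polynomial.eval_finsetSum]

lemma isBigO_pow_of_re_le {f : ℂ → ℂ} (hf : Differentiable ℂ f) {n : ℕ} {C : ℝ}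
    (hre : ∀ z, (f z).re ≤ C * (1 + ‖z‖ ^ n)) :
    f =O[cobounded ℂ] fun z ↦ ‖z‖ ^ n := by
  set D : ℝ := |C| + 1
  have : 0 < D := by positivity
  refine .of_bound (2 * (D * (1 + 2 ^ n)) + 3 * ‖f 0‖) ?_
  filter_upwards [tendsto_norm_cobounded_atTop.eventually_ge_atTop 1] with z hz
  have hpow : 1 ≤ ‖z‖ ^ n := one_le_pow₀ hz
  have hmaps : Set.MapsTo f (Metric.ball 0 (2 * ‖z‖)) {w | w.re ≤ D * (1 + (2 * ‖z‖) ^ n)} := by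
    intro w hw
    have hw' : ‖w‖ ≤ 2 * ‖z‖ := (mem_ball_zero_iff.mp hw).le
    calc (f w).re ≤ C * (1 + ‖w‖ ^ n) := hre w
      _ ≤ D * (1 + (2 * ‖z‖) ^ n) := by gcongr; exact (le_abs_self C).trans (by simp [D])
  have : 0 < ‖z‖ := by positivity
  calc ‖f z‖ ≤ 2 * (D * (1 + (2 * ‖z‖) ^ n)) * ‖z‖ / (2 * ‖z‖ - ‖z‖)
        + ‖f 0‖ * (2 * ‖z‖ + ‖z‖) / (2 * ‖z‖ - ‖z‖) :=
        Complex.borelCaratheodory (by positivity) hf.differentiableOn hmaps (by positivity)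
          (by simp; linarith)
    _ = 2 * (D * (1 + 2 ^ n * ‖z‖ ^ n)) + 3 * ‖f 0‖ := by
        rw [show 2 * ‖z‖ - ‖z‖ = ‖z‖ by ring]; field_simp; ring
    _ ≤ 2 * (D * (‖z‖ ^ n + 2 ^ n * ‖z‖ ^ n)) + 3 * (‖f 0‖ * ‖z‖ ^ n) := by
        gcongr; exact le_mul_of_one_le_right (norm_nonneg _) hpow
    _ = (2 * (D * (1 + 2 ^ n)) + 3 * ‖f 0‖) * ‖‖z‖ ^ n‖ := by
        rw [norm_pow, norm_norm]; ring

lemma exists_polynomial_cexp_eq {f : ℂ → ℂ} (hf : Differentiable ℂ f) (hf0 : ∀ z, f z ≠ 0)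
    {n : ℕ} {C : ℝ} (hle : ∀ z, ‖f z‖ ≤ Real.exp (C * (1 + ‖z‖ ^ n))) :
    ∃ p : ℂ[X], p.natDegree ≤ n ∧ ∀ z, f z = Complex.exp (p.eval z) := by
  have huniv : IsSimplyConnected (Set.univ : Set ℂ) :=
    (Homeomorph.Set.univ ℂ).toHomotopyEquiv.simplyConnectedSpace
  obtain ⟨g, hg, hexp⟩ := exists_differentiableOn_cexp_eqOn huniv isOpen_univ
    hf.differentiableOn fun z _ ↦ hf0 z
  replace hexp (z : ℂ) : Complex.exp (g z) = f z := hexp (Set.mem_univ z)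
  have hre (z : ℂ) : (g z).re ≤ C * (1 + ‖z‖ ^ n) := by
    rw [← Real.exp_le_exp, ← Complex.norm_exp, hexp]
    exact hle z
  rw [differentiableOn_univ] at hg
  obtain ⟨p, hdeg, hp⟩ := exists_polynomial_of_isBigO_pow hg (isBigO_pow_of_re_le hg hre)
  exact ⟨p, hdeg, fun z ↦ by rw [← hexp, hp]⟩

end EntireFunctions

section MomentGeneratingFunctions

variable {Ω : Type*} {mΩ : MeasurableSpace Ω} {μ : Measure Ω} {X Y : Ω → ℝ}

lemma complexMGF_add_of_indepFun (hX : AEMeasurable X μ) (hY : AEMeasurable Y μ)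
    (hXY : IndepFun X Y μ) (z : ℂ) :
    complexMGF (X + Y) μ z = complexMGF X μ z * complexMGF Y μ z := by
  have hcexp : Measurable fun x : ℝ ↦ Complex.exp (z * x) := by fun_prop
  simp only [complexMGF, Pi.add_apply, Complex.ofReal_add, mul_add, Complex.exp_add]
  exact hXY.integral_fun_comp_mul_comp hX hY hcexp.aestronglyMeasurable hcexp.aestronglyMeasurable

lemma mem_integrableExpSet_iff_mgf_ne_zero [NeZero μ] {t : ℝ} :
    t ∈ integrableExpSet X μ ↔ mgf X μ t ≠ 0 :=
  mgf_pos_iff.symm.trans mgf_nonneg.lt_iff_ne'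

lemma integrableExpSet_add_of_indepFun [NeZero μ] (hX : AEMeasurable X μ) (hY : AEMeasurable Y μ)
    (hXY : IndepFun X Y μ) :
    integrableExpSet (X + Y) μ = integrableExpSet X μ ∩ integrableExpSet Y μ := by
  ext t
  rw [Set.mem_inter_iff]
  simp only [mem_integrableExpSet_iff_mgf_ne_zero,
    hXY.mgf_add' hX.aestronglyMeasurable hY.aestronglyMeasurable, mul_ne_zero_iff]

lemma integrable_of_integrableExpSet_eq_univ (hX : integrableExpSet X μ = Set.univ) :
    Integrable X μ :=
  integrable_of_mem_interior_integrableExpSet (by simp [hX])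

lemma exp_mul_integral_le_mgf [IsProbabilityMeasure μ] (hX : Integrable X μ) {t : ℝ}
    (ht : t ∈ integrableExpSet X μ) : Real.exp (t * μ[X]) ≤ mgf X μ t := by
  rw [← integral_const_mul]
  exact convexOn_exp.map_integral_le Real.continuous_exp.continuousOn isClosed_univ
    (by simp) (hX.const_mul t) ht

lemma mgf_mul_exp_integral_le_mgf_add [IsProbabilityMeasure μ] (hX : AEMeasurable X μ)
    (hY : Integrable Y μ) (hXY : IndepFun X Y μ) {t : ℝ} (ht : t ∈ integrableExpSet Y μ) :
    mgf X μ t * Real.exp (t * μ[Y]) ≤ mgf (X + Y) μ t := by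
  rw [hXY.mgf_add' hX.aestronglyMeasurable hY.aestronglyMeasurable]
  gcongr
  · exact mgf_nonneg
  · exact exp_mul_integral_le_mgf hY ht

lemma map_eq_gaussianReal_of_mgf_eq [IsProbabilityMeasure μ] {m s : ℝ}
    (hmgf : ∀ t, mgf X μ t = Real.exp (m * t + s * t ^ 2 / 2)) :
    μ.map X = gaussianReal m s.toNNReal := by
  have huniv : integrableExpSet X μ = Set.univ := Set.eq_univ_of_forall fun t ↦
    mem_integrableExpSet_iff_mgf_ne_zero.mpr (hmgf t ▸ Real.exp_ne_zero _)
  have hX : Integrable X μ := integrable_of_integrableExpSet_eq_univ huniv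
  have hs : 0 ≤ s := by
    have hjensen (t : ℝ) : t * μ[X] ≤ m * t + s * t ^ 2 / 2 := by
      rw [← Real.exp_le_exp, ← hmgf]
      exact exp_mul_integral_le_mgf hX (huniv ▸ Set.mem_univ t)
    linarith [hjensen 1, hjensen (-1)]
  have hmgf_eq : mgf X μ = mgf id (gaussianReal m s.toNNReal) := by
    rw [mgf_id_gaussianReal, Real.coe_toNNReal s hs]
    exact funext hmgf
  have hcomplex : complexMGF X μ = complexMGF id (gaussianReal m s.toNNReal) := by
    simpa [huniv] using eqOn_complexMGF_of_mgf hmgf_eq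
  simpa using Measure.ext_of_complexMGF_eq hX.aemeasurable aemeasurable_id hcomplex

/-- A case of Marcinkiewicz's theorem. -/
lemma exists_map_eq_gaussianReal_of_complexMGF_ne_zero [IsProbabilityMeasure μ]
    (hne : ∀ z, complexMGF X μ z ≠ 0) {C : ℝ}
    (hle : ∀ t, mgf X μ t ≤ Real.exp (C * (1 + t ^ 2))) :
    ∃ (m : ℝ) (v : ℝ≥0), μ.map X = gaussianReal m v := by
  have huniv : integrableExpSet X μ = Set.univ := Set.eq_univ_of_forall fun t ↦
    mem_integrableExpSet_iff_mgf_ne_zero.mpr (by simpa [complexMGF_ofReal] using hne t)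
  have hdiff : Differentiable ℂ (complexMGF X μ) := by
    simpa [huniv, differentiableOn_univ] using differentiableOn_complexMGF (X := X) (μ := μ)
  have hgrowth (z : ℂ) : ‖complexMGF X μ z‖ ≤ Real.exp (|C| * (1 + ‖z‖ ^ 2)) := by
    calc ‖complexMGF X μ z‖ ≤ mgf X μ z.re := norm_complexMGF_le_mgf
      _ ≤ Real.exp (C * (1 + |z.re| ^ 2)) := by simpa using hle z.re
      _ ≤ Real.exp (|C| * (1 + ‖z‖ ^ 2)) := by
          gcongr
          · exact le_abs_self C
          · exact Complex.abs_re_le_norm z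
  obtain ⟨p, hdeg, hp⟩ := exists_polynomial_cexp_eq hdiff hne hgrowth
  have hmgf (t : ℝ) : mgf X μ t =
      Real.exp ((p.coeff 0).re + (p.coeff 1).re * t + (p.coeff 2).re * t ^ 2) := by
    rw [← abs_of_nonneg (mgf_nonneg (X := X) (μ := μ)), ← Real.norm_eq_abs, ← Complex.norm_real,
      ← complexMGF_ofReal, hp, Complex.norm_exp,
      Polynomial.eval_eq_sum_range' (Nat.lt_succ_of_le hdeg)]
    simp [Finset.sum_range_succ, ← Complex.ofReal_pow]
  have hcoeff : (p.coeff 0).re = 0 := by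
    rw [← Real.exp_eq_one_iff]
    simpa using (hmgf 0).symm
  refine ⟨(p.coeff 1).re, _, map_eq_gaussianReal_of_mgf_eq (s := 2 * (p.coeff 2).re) fun t ↦ ?_⟩
  rw [hmgf, hcoeff]
  ring_nf

end MomentGeneratingFunctions

section CramerDecomposition

variable {Ω : Type*} {mΩ : MeasurableSpace Ω} {μ : Measure Ω}

lemma exists_map_eq_gaussianReal_of_map_add_eq {X Y : Ω → ℝ} (hX : AEMeasurable X μ)
    (hY : AEMeasurable Y μ) (hXY : IndepFun X Y μ) {m : ℝ} {v : ℝ≥0}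
    (hsum : μ.map (X + Y) = gaussianReal m v) :
    ∃ (m' : ℝ) (v' : ℝ≥0), μ.map X = gaussianReal m' v' := by
  have : IsProbabilityMeasure (μ.map (X + Y)) := hsum ▸ inferInstance
  have : IsProbabilityMeasure μ := μ.isProbabilityMeasure_of_map (X + Y)
  have hmem (t : ℝ) : t ∈ integrableExpSet X μ ∩ integrableExpSet Y μ := by
    rw [← integrableExpSet_add_of_indepFun hX hY hXY, mem_integrableExpSet_iff_mgf_ne_zero,
      mgf_gaussianReal hsum]
    exact Real.exp_ne_zero _
  have hYint : Integrable Y μ :=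
    integrable_of_integrableExpSet_eq_univ (Set.eq_univ_of_forall fun t ↦ (hmem t).2)
  have hne (z : ℂ) : complexMGF X μ z ≠ 0 := by
    refine left_ne_zero_of_mul (b := complexMGF Y μ z) ?_
    rw [← complexMGF_add_of_indepFun hX hY hXY, complexMGF_gaussianReal hsum]
    exact Complex.exp_ne_zero _
  refine exists_map_eq_gaussianReal_of_complexMGF_ne_zero hne (C := |m - μ[Y]| + v) fun t ↦ ?_
  calc mgf X μ t ≤ Real.exp (m * t + v * t ^ 2 / 2) / Real.exp (t * μ[Y]) := by
        rw [le_div_iff₀ (Real.exp_pos _), ← mgf_gaussianReal hsum]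
        exact mgf_mul_exp_integral_le_mgf_add hX hYint hXY (hmem t).2
    _ = Real.exp ((m - μ[Y]) * t + v * t ^ 2 / 2) := by
        rw [← Real.exp_sub]; ring_nf
    _ ≤ Real.exp ((|m - μ[Y]| + v) * (1 + t ^ 2)) := by
        have hlin : (m - μ[Y]) * t ≤ |m - μ[Y]| * (1 + t ^ 2) := by
          calc (m - μ[Y]) * t ≤ |m - μ[Y]| * |t| := abs_mul (m - μ[Y]) t ▸ le_abs_self _
            _ ≤ |m - μ[Y]| * (1 + t ^ 2) := by gcongr; nlinarith [sq_abs t, sq_nonneg (|t| - 1)]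
        gcongr
        nlinarith [mul_nonneg v.coe_nonneg (sq_nonneg t), v.coe_nonneg]

variable {E : Type*} [TopologicalSpace E] [AddCommMonoid E] [Module ℝ E] [MeasurableSpace E]
  [OpensMeasurableSpace E]

/-- **Cramér's decomposition theorem**. -/
theorem hasGaussianLaw_of_indepFun_of_hasGaussianLaw_add {X Y : Ω → E} (hX : AEMeasurable X μ)
    (hY : AEMeasurable Y μ) (hXY : IndepFun X Y μ) (hsum : HasGaussianLaw (X + Y) μ) :
    HasGaussianLaw X μ := by
  refine ⟨isGaussian_of_map_eq_gaussianReal fun L ↦ ?_⟩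
  have hL : Measurable L := L.continuous.measurable
  have hLsum := (hsum.map_of_measurable L hL).map_eq_gaussianReal
  rw [show ⇑L ∘ (X + Y) = L ∘ X + L ∘ Y from funext fun ω ↦ map_add L _ _] at hLsum
  rw [AEMeasurable.map_map_of_aemeasurable hL.aemeasurable hX]
  exact exists_map_eq_gaussianReal_of_map_add_eq (hL.comp_aemeasurable hX)
    (hL.comp_aemeasurable hY) (hXY.comp hL hL) hLsum

theorem sum_not_std_normal_of_not_gaussian_general {ξ η : Ω → E} (hξ : AEMeasurable ξ μ)
    (hη : AEMeasurable η μ) (hindep : IndepFun ξ η μ) (hnotgauss : ¬ HasGaussianLaw ξ μ) :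
    ¬ HasGaussianLaw (ξ + η) μ :=
  fun hsum ↦ hnotgauss (hasGaussianLaw_of_indepFun_of_hasGaussianLaw_add hξ hη hindep hsum)

end CramerDecomposition

theorem sum_not_std_normal_of_not_gaussian {Ω : Type*} [MeasurableSpace Ω] (μ : Measure Ω)
    [IsProbabilityMeasure μ] (ξ η : Ω → ℝ) (hξ : Measurable ξ) (hη : Measurable η)
    (hindep : IndepFun ξ η μ)
    (hnotgauss : ¬ ∃ (m : ℝ) (v : NNReal), μ.map ξ = gaussianReal m v) :
    μ.map (ξ + η) ≠ gaussianReal 0 1 :=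
  fun hsum ↦ sum_not_std_normal_of_not_gaussian_general hξ.aemeasurable hη.aemeasurable hindep
    (fun hgauss ↦ hnotgauss ⟨_, _, hgauss.map_eq_gaussianReal⟩) ⟨hsum ▸ inferInstance⟩
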